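/- (Exponential moment bound for the second flow) Let ρ > 0, let h : V → ℝ change sign with max_{x∈V} h(x) > 0, let 0 < T < +∞, and let u : V × [0,T) → ℝ solve the second flow ∂_t u = α(t)h − R with ∫_V h e^{u(·,0)} dμ = 1. Then for every γ ≥ 1 there exists a constant C, depending only on (V, μ, W), T, ρ, h, the initial function u(·,0) and γ, such that sup_{0 ≤ t < T} ∫_V e^{γ u(·,t)} dμ ≤ C. -/

import Mathlib

open Real Finset

variable {V : Type*}

/-- Discrete integral: `∫_V f dμ = Σ_x μ(x) f(x)`. -/
noncomputable def intV [Fintype V] (μ f : V → ℝ) : ℝ := ∑ x, μ x * f x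

/-- Volume `|V| = Σ_x μ(x)`. -/
noncomputable def volV [Fintype V] (μ : V → ℝ) : ℝ := ∑ x, μ x

/-- The nonlocal (fractional graph Laplacian type) operator
`Lu(x) = (1/μ(x)) Σ_{y ≠ x} W(x,y)(u(x) − u(y))`. -/
noncomputable def opL [Fintype V] [DecidableEq V] (μ : V → ℝ) (W : V → V → ℝ)
    (u : V → ℝ) (x : V) : ℝ :=
  (1 / μ x) * ∑ y ∈ univ.filter (fun y => y ≠ x), W x y * (u x - u y)

/-- Gradient form `∇u·∇v(x) = (1/(2μ(x))) Σ_{y ≠ x} W(x,y)(u(x)−u(y))(v(x)−v(y))`. -/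
noncomputable def gradForm [Fintype V] [DecidableEq V] (μ : V → ℝ) (W : V → V → ℝ)
    (u v : V → ℝ) (x : V) : ℝ :=
  (1 / (2 * μ x)) * ∑ y ∈ univ.filter (fun y => y ≠ x), W x y * (u x - u y) * (v x - v y)

/-- `|∇u|²(x) = ∇u·∇u(x)`. -/
noncomputable def gradSq [Fintype V] [DecidableEq V] (μ : V → ℝ) (W : V → V → ℝ)
    (u : V → ℝ) (x : V) : ℝ := gradForm μ W u u x


/-- The scalar curvature type function `R = (1/ρ) e^{−u} (Lu + ρ/|V|)`. -/
noncomputable def Rcurv [Fintype V] [DecidableEq V] (μ : V → ℝ) (W : V → V → ℝ)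
    (ρ : ℝ) (u : V → ℝ) (x : V) : ℝ :=
  (1 / ρ) * Real.exp (-(u x)) * (opL μ W u x + ρ / volV μ)

/-- The normalized coefficient `α = (∫_V h R e^u dμ) / (∫_V h² e^u dμ)`. -/
noncomputable def alphaC [Fintype V] [DecidableEq V] (μ : V → ℝ) (W : V → V → ℝ)
    (ρ : ℝ) (h : V → ℝ) (u : V → ℝ) : ℝ :=
  intV μ (fun x => h x * Rcurv μ W ρ u x * Real.exp (u x)) /
    intV μ (fun x => (h x) ^ 2 * Real.exp (u x))

/-- The Liouville type energy. -/
noncomputable def energyJ [Fintype V] (μ : V → ℝ) (W : V → V → ℝ) (ρ : ℝ) (u : V → ℝ) : ℝ :=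
  (1 / 4) * (∑ x, ∑ y, W x y * (u x - u y) ^ 2) + ρ / volV μ * ∑ x, μ x * u x

lemma mul_opL [Fintype V] [DecidableEq V] (μ : V → ℝ) (W : V → V → ℝ)
    (hμ : ∀ x, 0 < μ x) (u : V → ℝ) (x : V) :
    μ x * opL μ W u x = ∑ y, W x y * (u x - u y) := by
  unfold opL
  have h1 : μ x ≠ 0 := (hμ x).ne'
  rw [← mul_assoc, mul_one_div_cancel h1, one_mul, Finset.sum_filter]
  refine Finset.sum_congr rfl fun y _ => ?_
  by_cases hy : y = x
  · simp [hy]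
  · simp [hy]

lemma sum_form [Fintype V] (W : V → V → ℝ) (hWsym : ∀ x y, W x y = W y x) (u v : V → ℝ) :
    ∑ x, ∑ y, W x y * ((u x - u y) * (v x - v y)) =
      2 * ∑ x, v x * ∑ y, W x y * (u x - u y) := by
  have h1 : ∑ x, ∑ y, W x y * ((u x - u y) * (v x - v y)) =
      (∑ x, ∑ y, v x * (W x y * (u x - u y))) + ∑ x, ∑ y, v y * (W y x * (u y - u x)) := by
    simp only [← Finset.sum_add_distrib]
    refine Finset.sum_congr rfl fun x _ => Finset.sum_congr rfl fun y _ => ?_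
    rw [hWsym y x]; ring
  have h2 : ∑ x, ∑ y, v y * (W y x * (u y - u x)) = ∑ x, ∑ y, v x * (W x y * (u x - u y)) :=
    Finset.sum_comm
  rw [h1, h2]
  simp only [Finset.mul_sum]
  rw [← Finset.sum_add_distrib]
  refine Finset.sum_congr rfl fun x _ => ?_
  rw [← Finset.sum_add_distrib]
  refine Finset.sum_congr rfl fun y _ => by ring

lemma energyJ_hasDerivAt [Fintype V] [DecidableEq V] (μ : V → ℝ) (W : V → V → ℝ)
    (hμ : ∀ x, 0 < μ x) (hWsym : ∀ x y, W x y = W y x) (ρ : ℝ)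
    (u : ℝ → V → ℝ) (v : V → ℝ) (t : ℝ) (hu : ∀ x, HasDerivAt (fun s => u s x) (v x) t) :
    HasDerivAt (fun s => energyJ μ W ρ (u s))
      (∑ x, μ x * (v x * (opL μ W (u t) x + ρ / volV μ))) t := by
  have h1 : HasDerivAt (fun s => energyJ μ W ρ (u s))
      ((1 / 4) * (∑ x, ∑ y, W x y * (2 * (u t x - u t y) * (v x - v y)))
        + ρ / volV μ * ∑ x, μ x * v x) t := by
    unfold energyJ
    refine HasDerivAt.add (HasDerivAt.const_mul _ ?_) (HasDerivAt.const_mul _ ?_)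
    · refine HasDerivAt.fun_sum fun x _ => HasDerivAt.fun_sum fun y _ => HasDerivAt.const_mul _ ?_
      simpa using ((hu x).fun_sub (hu y)).fun_pow 2
    · exact HasDerivAt.fun_sum fun x _ => (hu x).const_mul _
  convert h1 using 1
  have h2 : ∑ x, ∑ y, W x y * (2 * (u t x - u t y) * (v x - v y)) =
      2 * ∑ x, ∑ y, W x y * ((u t x - u t y) * (v x - v y)) := by
    simp only [Finset.mul_sum]
    refine Finset.sum_congr rfl fun x _ => Finset.sum_congr rfl fun y _ => by ring
  rw [h2, sum_form W hWsym]
  simp only [← mul_opL μ W hμ]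
  rw [← mul_assoc, ← mul_assoc, show (1 / 4 * 2 * 2 : ℝ) = 1 by norm_num, one_mul,
    Finset.mul_sum, ← Finset.sum_add_distrib]
  refine Finset.sum_congr rfl fun x _ => by ring

lemma energyJ_deriv_nonpos [Fintype V] [DecidableEq V] (μ : V → ℝ) (W : V → V → ℝ)
    (hμ : ∀ x, 0 < μ x) (ρ : ℝ) (hρ : 0 < ρ) (h : V → ℝ) (hpos : ∃ x, 0 < h x) (u : V → ℝ) :
    ∑ x, μ x * ((alphaC μ W ρ h u * h x - Rcurv μ W ρ u x) * (opL μ W u x + ρ / volV μ)) ≤ 0 := by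
  have hR : ∀ x, opL μ W u x + ρ / volV μ = ρ * (Rcurv μ W ρ u x * exp (u x)) := by
    intro x
    unfold Rcurv
    rw [Real.exp_neg]
    have := (Real.exp_pos (u x)).ne'
    field_simp
  have hA : 0 < intV μ (fun x => (h x) ^ 2 * Real.exp (u x)) := by
    obtain ⟨z, hz⟩ := hpos
    unfold intV
    refine Finset.sum_pos' (fun x _ => ?_) ⟨z, Finset.mem_univ z, ?_⟩
    · have := (hμ x).le
      positivity
    · have := hμ z
      positivity
  have hα : alphaC μ W ρ h u * intV μ (fun x => (h x) ^ 2 * Real.exp (u x)) =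
      intV μ (fun x => h x * Rcurv μ W ρ u x * Real.exp (u x)) := by
    unfold alphaC
    exact div_mul_cancel₀ _ hA.ne'
  set a := alphaC μ W ρ h u
  have key : ∑ x, μ x * ((a * h x - Rcurv μ W ρ u x) * (opL μ W u x + ρ / volV μ)) =
      -ρ * (∑ x, μ x * ((a * h x - Rcurv μ W ρ u x) ^ 2 * exp (u x))) +
      ρ * a * (a * intV μ (fun x => (h x) ^ 2 * Real.exp (u x)) -
        intV μ (fun x => h x * Rcurv μ W ρ u x * Real.exp (u x))) := by
    unfold intV
    simp only [mul_sub, Finset.mul_sum, ← Finset.sum_add_distrib, ← Finset.sum_sub_distrib]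
    refine Finset.sum_congr rfl fun x _ => ?_
    rw [hR x]; ring
  rw [key, hα, sub_self, mul_zero, add_zero]
  have : 0 ≤ ∑ x, μ x * ((a * h x - Rcurv μ W ρ u x) ^ 2 * exp (u x)) :=
    Finset.sum_nonneg fun x _ => by
      have := (hμ x).le
      positivity
  nlinarith

lemma le_energyJ [Fintype V] [Nonempty V] (μ : V → ℝ) (W : V → V → ℝ)
    (hμ : ∀ x, 0 < μ x) (hWpos : ∀ x y, x ≠ y → 0 < W x y) (ρ : ℝ) (u : V → ℝ) (z : V) :
    ρ * u z ≤ energyJ μ W ρ u + ∑ y, (ρ / volV μ * μ y) ^ 2 / |W z y| := by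
  have hvol : 0 < volV μ := Finset.sum_pos (fun x _ => hμ x) Finset.univ_nonempty
  have hnn : ∀ x y, 0 ≤ W x y * (u x - u y) ^ 2 := by
    intro x y
    by_cases hxy : x = y
    · simp [hxy]
    · have := (hWpos x y hxy).le
      positivity
  have h1 : ∑ y, W z y * (u z - u y) ^ 2 ≤ ∑ x, ∑ y, W x y * (u x - u y) ^ 2 :=
    Finset.single_le_sum (f := fun x => ∑ y, W x y * (u x - u y) ^ 2)
      (fun x _ => Finset.sum_nonneg fun y _ => hnn x y) (Finset.mem_univ z)
  have h2 : ∑ y, (ρ / volV μ * μ y) * (u z - u y) ≤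
      ∑ y, ((1 / 4) * (W z y * (u z - u y) ^ 2) + (ρ / volV μ * μ y) ^ 2 / |W z y|) := by
    refine Finset.sum_le_sum fun y _ => ?_
    by_cases hy : z = y
    · subst hy
      rw [sub_self, mul_zero, zero_pow two_ne_zero, mul_zero, mul_zero, zero_add]
      positivity
    · have hw := hWpos z y hy
      rw [abs_of_pos hw]
      generalize ρ / volV μ * μ y = a
      generalize u z - u y = d
      have : 1 / 4 * (W z y * d ^ 2) + a ^ 2 / W z y - a * d = (W z y * d / 2 - a) ^ 2 / W z y := by
        field_simp
        ring
      have h3 : 0 ≤ (W z y * d / 2 - a) ^ 2 / W z y := by positivity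
      linarith
  rw [Finset.sum_add_distrib, ← Finset.mul_sum] at h2
  have h4 : ∑ y, (ρ / volV μ * μ y) * (u z - u y) = ρ * u z - ρ / volV μ * ∑ x, μ x * u x := by
    have h5 : ρ * u z = ρ / volV μ * ∑ x, μ x * u z := by
      rw [← Finset.sum_mul]
      change ρ * u z = ρ / volV μ * (volV μ * u z)
      field_simp
    rw [h5, ← mul_sub, ← Finset.sum_sub_distrib, Finset.mul_sum]
    refine Finset.sum_congr rfl fun x _ => by ring
  unfold energyJ
  linarith

/-- (Exponential moment bound for the second flow) For every `γ ≥ 1`,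
`sup_{0 ≤ t < T} ∫_V e^{γ u(·,t)} dμ` is finite along the second flow on a finite interval. -/
theorem second_flow_exp_moment [Fintype V] [Nonempty V] [DecidableEq V]
    (μ : V → ℝ) (W : V → V → ℝ)
    (hμ : ∀ x, 0 < μ x)
    (hWsym : ∀ x y, W x y = W y x)
    (hWpos : ∀ x y, x ≠ y → 0 < W x y)
    (ρ : ℝ) (hρ : 0 < ρ)
    (h : V → ℝ) (hpos : ∃ x, 0 < h x) (hneg : ∃ x, h x < 0)
    (T : ℝ) (hT : 0 < T) (u : ℝ → V → ℝ)
    (hinit : intV μ (fun x => h x * Real.exp (u 0 x)) = 1)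
    (hflow : ∀ x, ∀ t ∈ Set.Ico (0 : ℝ) T,
      HasDerivAt (fun s => u s x)
        (alphaC μ W ρ h (u t) * h x - Rcurv μ W ρ (u t) x) t)
    (γ : ℝ) (hγ : 1 ≤ γ) :
    ∃ C : ℝ, ∀ t ∈ Set.Ico (0 : ℝ) T,
      intV μ (fun x => Real.exp (γ * u t x)) ≤ C := by
  have hD : ∀ t ∈ Set.Ico (0 : ℝ) T, HasDerivAt (fun s => energyJ μ W ρ (u s)) _ t :=
    fun t ht => energyJ_hasDerivAt μ W hμ hWsym ρ u _ t (fun x => hflow x t ht)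
  have hanti : AntitoneOn (fun s => energyJ μ W ρ (u s)) (Set.Ico 0 T) := by
    refine antitoneOn_of_deriv_nonpos (convex_Ico 0 T)
      (fun t ht => (hD t ht).continuousAt.continuousWithinAt)
      (fun t ht => (hD t (interior_subset ht)).differentiableAt.differentiableWithinAt)
      (fun t ht => ?_)
    rw [(hD t (interior_subset ht)).deriv]
    exact energyJ_deriv_nonpos μ W hμ ρ hρ h hpos (u t)
  refine ⟨∑ x, μ x * exp (γ *
    ((energyJ μ W ρ (u 0) + ∑ y, (ρ / volV μ * μ y) ^ 2 / |W x y|) / ρ)), fun t ht => ?_⟩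
  unfold intV
  refine Finset.sum_le_sum fun x _ => mul_le_mul_of_nonneg_left (Real.exp_le_exp.2
    (mul_le_mul_of_nonneg_left ?_ (by linarith))) (hμ x).le
  rw [le_div_iff₀ hρ]
  have h1 := le_energyJ μ W hμ hWpos ρ (u t) x
  have h2 : energyJ μ W ρ (u t) ≤ energyJ μ W ρ (u 0) := hanti ⟨le_rfl, hT⟩ ht ht.1
  linarith
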